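/- arXiv:1101.2976 — 9 statements merged into one kernel-verified Lean document; each statement's English description precedes it below -/
import Mathlib

section
/- Let R be a Ψ-ring with operations Ψ^i, let M be a Ψ-module over R with operations ψ^i, and let ε^i : R → M (i ≥ 1) be a family of functions. Define maps Ψ̃^i on the square-zero extension R ⋊ M by Ψ̃^i(r,m) = (Ψ^i(r), ψ^i(m) + ε^i(r)). Then the maps Ψ̃^i make R ⋊ M into a Ψ-ring (i.e. each Ψ̃^i is a ring homomorphism, Ψ̃^1 is the identity, and Ψ̃^i ∘ Ψ̃^j = Ψ̃^{ij} for all i,j ≥ 1) if and only if for all r, s ∈ R and all i, j ≥ 1: (1) ε^1(r) = 0, (2) ε^i(r+s) = ε^i(r) + ε^i(s), (3) ε^i(rs) = Ψ^i(r)·ε^i(s) + ε^i(r)·Ψ^i(s), and (4) ε^{ij}(r) = ψ^i(ε^j(r)) + ε^i(Ψ^j(r)). -/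
/-- Multiplication on the trivial square-zero extension `R ⋊ M`:
`(r,m)(s,n) = (rs, r·n + s·m)`. -/
def sqMul {R M : Type*} [CommRing R] [AddCommGroup M] [Module R M]
    (x y : R × M) : R × M :=
  (x.1 * y.1, x.1 • y.2 + y.1 • x.2)

/-- The candidate operations `Ψ̃^i(r,m) = (Ψ^i(r), ψ^i(m) + ε^i(r))` on `R ⋊ M`. -/
def psiTilde {R M : Type*} [CommRing R] [AddCommGroup M]
    (Ψ : ℕ → R → R) (ψ : ℕ → M → M) (ε : ℕ → R → M) (i : ℕ) (x : R × M) : R × M :=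
  (Ψ i x.1, ψ i x.2 + ε i x.1)

theorem stmt0 {R M : Type*} [CommRing R] [AddCommGroup M] [Module R M]
    (Ψ : ℕ → R → R) (ψ : ℕ → M → M) (ε : ℕ → R → M)
    -- `R` is a Ψ-ring: each `Ψ^i` (i ≥ 1) is a ring homomorphism, `Ψ^1 = id`,
    -- and `Ψ^i ∘ Ψ^j = Ψ^{ij}`.
    (hΨadd : ∀ i, 1 ≤ i → ∀ r s : R, Ψ i (r + s) = Ψ i r + Ψ i s)
    (hΨmul : ∀ i, 1 ≤ i → ∀ r s : R, Ψ i (r * s) = Ψ i r * Ψ i s)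
    (hΨone : ∀ i, 1 ≤ i → Ψ i 1 = 1)
    (hΨ1 : ∀ r : R, Ψ 1 r = r)
    (hΨcomp : ∀ i, 1 ≤ i → ∀ j, 1 ≤ j → ∀ r : R, Ψ i (Ψ j r) = Ψ (i * j) r)
    -- `M` is a Ψ-module over `R`.
    (hψadd : ∀ i, 1 ≤ i → ∀ m n : M, ψ i (m + n) = ψ i m + ψ i n)
    (hψ1 : ∀ m : M, ψ 1 m = m)
    (hψsmul : ∀ i, 1 ≤ i → ∀ (r : R) (m : M), ψ i (r • m) = Ψ i r • ψ i m)
    (hψcomp : ∀ i, 1 ≤ i → ∀ j, 1 ≤ j → ∀ m : M, ψ i (ψ j m) = ψ (i * j) m) :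
    -- The maps `Ψ̃^i` make `R ⋊ M` into a Ψ-ring …
    ((∀ i, 1 ≤ i →
        (∀ x y : R × M, psiTilde Ψ ψ ε i (x + y) = psiTilde Ψ ψ ε i x + psiTilde Ψ ψ ε i y) ∧
        (∀ x y : R × M,
          psiTilde Ψ ψ ε i (sqMul x y) = sqMul (psiTilde Ψ ψ ε i x) (psiTilde Ψ ψ ε i y)) ∧
        psiTilde Ψ ψ ε i ((1 : R), (0 : M)) = ((1 : R), (0 : M))) ∧
      (∀ x : R × M, psiTilde Ψ ψ ε 1 x = x) ∧
      (∀ i, 1 ≤ i → ∀ j, 1 ≤ j → ∀ x : R × M,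
        psiTilde Ψ ψ ε i (psiTilde Ψ ψ ε j x) = psiTilde Ψ ψ ε (i * j) x))
    ↔
    -- … if and only if conditions (1)–(4) hold.
    ((∀ r : R, ε 1 r = 0) ∧
      (∀ i, 1 ≤ i → ∀ r s : R, ε i (r + s) = ε i r + ε i s) ∧
      (∀ i, 1 ≤ i → ∀ r s : R, ε i (r * s) = Ψ i r • ε i s + Ψ i s • ε i r) ∧
      (∀ i, 1 ≤ i → ∀ j, 1 ≤ j → ∀ r : R, ε (i * j) r = ψ i (ε j r) + ε i (Ψ j r))) := by
  have hψ0 : ∀ i, 1 ≤ i → ψ i 0 = 0 := by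
    intro i hi
    have h := hψadd i hi 0 0
    rw [add_zero] at h
    exact left_eq_add.mp h
  constructor
  · rintro ⟨h, h1, hc⟩
    refine ⟨?_, ?_, ?_, ?_⟩
    · intro r
      have := congrArg Prod.snd (h1 (r, 0))
      simpa [psiTilde, hψ1] using this
    · intro i hi r s
      have := congrArg Prod.snd ((h i hi).1 (r, 0) (s, 0))
      simpa [psiTilde, hψ0 i hi] using this
    · intro i hi r s
      have := congrArg Prod.snd ((h i hi).2.1 (r, 0) (s, 0))
      simpa [psiTilde, sqMul, hψ0 i hi] using this
    · intro i hi j hj r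
      have hij : 1 ≤ i * j := Nat.mul_pos hi hj
      have := congrArg Prod.snd (hc i hi j hj (r, 0))
      simpa [psiTilde, hψ0 i hi, hψ0 j hj, hψ0 _ hij] using this.symm
  · rintro ⟨e1, ea, em, ec⟩
    refine ⟨fun i hi => ⟨?_, ?_, ?_⟩, ?_, ?_⟩
    · rintro ⟨r, m⟩ ⟨s, n⟩
      ext
      · simp [psiTilde, hΨadd i hi]
      · simp only [psiTilde, Prod.mk_add_mk, hψadd i hi, ea i hi]
        abel
    · rintro ⟨r, m⟩ ⟨s, n⟩
      ext
      · simp [psiTilde, sqMul, hΨmul i hi]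
      · simp only [psiTilde, sqMul, hψadd i hi, em i hi, hψsmul i hi, smul_add]
        abel
    · have h := em i hi 1 1
      rw [mul_one, hΨone i hi, one_smul] at h
      have h0 : ε i 1 = 0 := left_eq_add.mp h
      simp [psiTilde, hΨone i hi, hψ0 i hi, h0]
    · rintro ⟨r, m⟩
      simp [psiTilde, hΨ1, hψ1, e1]
    · rintro i hi j hj ⟨r, m⟩
      ext
      · simp [psiTilde, hΨcomp i hi j hj]
      · simp only [psiTilde, hψadd i hi, hψcomp i hi j hj, ec i hi j hj]
        abel
end

section
/- Let R be a commutative ring with identity equipped with operations λ^i : R → R (i ≥ 0) satisfying λ^0(r) = 1 and λ^1(r) = r, let Ψ^ν : R → R (ν ≥ 1) be the Adams operations defined recursively by the Newton formula Ψ^ν(r) = Σ_{i=1}^{ν−1} (−1)^{i+1} λ^i(r) Ψ^{ν−i}(r) + (−1)^{ν+1} ν λ^ν(r), let M be an R-module, and let Λ^i : M → M (i ≥ 1) be additive group homomorphisms with Λ^1(m) = m and Λ^i(r·m) = Ψ^i(r)·Λ^i(m). For r ∈ R and m ∈ M set χ_i(r,m) = Σ_{j=1}^{i} Λ^j(m)·λ^{i−j}(r)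 (with λ^0(r) = 1). Then for every r ∈ R, m ∈ M and every ν ≥ 2, Σ_{i=1}^{ν−1} [ (−1)^{i+1} χ_i(r,m)·Ψ^{ν−i}(r) + (−1)^{ν+1} i λ^i(r)·Λ^{ν−i}(m) ] = 0. -/
theorem stmt3 {R M : Type*} [CommRing R] [AddCommGroup M] [Module R M]
    (lam : ℕ → R → R) (Ψ : ℕ → R → R) (Λ : ℕ → M → M)
    (hlam0 : ∀ r : R, lam 0 r = 1)
    (hlam1 : ∀ r : R, lam 1 r = r)
    -- The Adams operations are defined recursively by the Newton formula.
    (hNewton : ∀ ν, 1 ≤ ν → ∀ r : R, Ψ ν r =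
      (∑ i ∈ Finset.Ico 1 ν, (-1 : R) ^ (i + 1) * lam i r * Ψ (ν - i) r) +
        (-1 : R) ^ (ν + 1) * (ν : R) * lam ν r)
    (hΛadd : ∀ i, 1 ≤ i → ∀ m m' : M, Λ i (m + m') = Λ i m + Λ i m')
    (hΛ1 : ∀ m : M, Λ 1 m = m)
    (hΛsmul : ∀ i, 1 ≤ i → ∀ (r : R) (m : M), Λ i (r • m) = Ψ i r • Λ i m) :
    -- with `χ_i(r,m) = Σ_{j=1}^{i} Λ^j(m)·λ^{i−j}(r)`:
    ∀ ν, 2 ≤ ν → ∀ (r : R) (m : M),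
      ∑ i ∈ Finset.Ico 1 ν,
        (((-1 : R) ^ (i + 1) * Ψ (ν - i) r) •
            (∑ j ∈ Finset.Icc 1 i, lam (i - j) r • Λ j m) +
          ((-1 : R) ^ (ν + 1) * (i : R) * lam i r) • Λ (ν - i) m) = 0 := by
  intro ν hν r m
  have key : ∀ n, 1 ≤ n → ∑ k ∈ Finset.range n, (-1 : R) ^ (k + 1) * lam k r * Ψ (n - k) r
      = (-1 : R) ^ n * (n : R) * lam n r := by
    intro n hn
    have h := hNewton n hn r
    rw [Finset.range_eq_Ico, Finset.sum_eq_sum_Ico_succ_bot (by omega)]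
    simp only [hlam0, Nat.sub_zero, zero_add]
    rw [pow_succ (-1 : R) n] at h
    linear_combination -h
  rw [Finset.sum_add_distrib]
  have h2 : ∑ i ∈ Finset.Ico 1 ν, ((-1 : R) ^ (ν + 1) * (i : R) * lam i r) • Λ (ν - i) m
      = ∑ j ∈ Finset.Ico 1 ν,
        ((-1 : R) ^ (ν + 1) * ((ν - j : ℕ) : R) * lam (ν - j) r) • Λ j m := by
    refine Finset.sum_bij' (fun i _ => ν - i) (fun i _ => ν - i) ?_ ?_ ?_ ?_ ?_
    · intro i hi; simp only [Finset.mem_Ico] at *; omega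
    · intro i hi; simp only [Finset.mem_Ico] at *; omega
    · intro i hi; simp only [Finset.mem_Ico] at *; omega
    · intro i hi; simp only [Finset.mem_Ico] at *; omega
    · intro i hi
      simp only [Finset.mem_Ico] at hi
      rw [show ν - (ν - i) = i by omega]
  have h1 : ∑ i ∈ Finset.Ico 1 ν, ((-1 : R) ^ (i + 1) * Ψ (ν - i) r) •
        (∑ j ∈ Finset.Icc 1 i, lam (i - j) r • Λ j m)
      = ∑ j ∈ Finset.Ico 1 ν, (∑ i ∈ Finset.Ico j ν,
          (-1 : R) ^ (i + 1) * Ψ (ν - i) r * lam (i - j) r) • Λ j m := by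
    simp only [Finset.smul_sum, Finset.sum_smul, smul_smul]
    apply Finset.sum_comm'
    intro i j
    simp only [Finset.mem_Ico, Finset.mem_Icc]
    omega
  rw [h1, h2, ← Finset.sum_add_distrib]
  apply Finset.sum_eq_zero
  intro j hj
  simp only [Finset.mem_Ico] at hj
  rw [← add_smul]
  have h3 : ∑ i ∈ Finset.Ico j ν, (-1 : R) ^ (i + 1) * Ψ (ν - i) r * lam (i - j) r
      = (-1 : R) ^ j * ((-1 : R) ^ (ν - j) * ((ν - j : ℕ) : R) * lam (ν - j) r) := by
    rw [← key (ν - j) (by omega), Finset.sum_Ico_eq_sum_range, Finset.mul_sum]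
    apply Finset.sum_congr rfl
    intro k _
    rw [show ν - (j + k) = ν - j - k by omega, show j + k - j = k by omega]
    ring
  have h4 : (-1 : R) ^ ν = (-1) ^ j * (-1) ^ (ν - j) := by
    rw [← pow_add]; congr 1; omega
  rw [h3, pow_succ, h4]
  convert zero_smul R (Λ j m) using 2
  ring
end

section
/- Let R be a pre-λ-ring with operations λ^i, let Ψ^ν : R → R (ν ≥ 1) be the Adams operations defined by the Newton formula, let M be an R-module, and let Λ^i : M → M (i ≥ 1) be additive group homomorphisms with Λ^1(m) = m and Λ^i(r·m) = Ψ^i(r)·Λ^i(m). Suppose d : R → M is an additive homomorphism satisfying d(rs) = r·d(s) + d(r)·s and d(λ^i(r)) = Σ_{j=1}^{i} Λ^j(d(r))·λ^{i−j}(r) for all r,s ∈ R and i ≥ 1 (i.e. d is a λ-derivation). Then d(Ψ^ν(r)) = (−1)^{ν+1} ν Λ^ν(d(r)) for all r ∈ R and ν ≥ 1; that is, every λ-derivation is a Ψ-derivation with respect to the Adams operations ψ^ν = (−1)^{ν+1} ν Λ^ν on M. -/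
theorem aux_rec {R M : Type*} [CommRing R] [AddCommGroup M] [Module R M]
    (a p : ℕ → R) (D : ℕ → M) (d : R →+ M)
    (hdmul : ∀ r s : R, d (r * s) = r • d s + s • d r)
    (ha0 : a 0 = 1)
    (hN : ∀ n, ∑ x ∈ Finset.HasAntidiagonal.antidiagonal n, a x.1 * p x.2 = -((n : ℤ) • a n))
    (hd : ∀ n, d (a n) = ∑ x ∈ Finset.HasAntidiagonal.antidiagonal n, a x.1 • D x.2) :
    ∀ n, d (p n) = -((n : ℤ) • D n) := by
  have key : ∀ n, ∑ x ∈ Finset.HasAntidiagonal.antidiagonal n, a x.1 • (d (p x.2) + (x.2 : ℤ) • D x.2) = 0 := by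
    intro n
    have h1 := congrArg d (hN n)
    rw [map_sum, map_neg, map_zsmul, hd] at h1
    simp only [hdmul, Finset.sum_add_distrib] at h1
    have h2 : ∑ x ∈ Finset.HasAntidiagonal.antidiagonal n, p x.2 • d (a x.1)
        = ∑ x ∈ Finset.HasAntidiagonal.antidiagonal n, (-(x.1 : ℤ)) • (a x.1 • D x.2) := by
      have h3 : ∀ x : ℕ × ℕ, (-(x.1 : ℤ)) • (a x.1 • D x.2)
          = ∑ y ∈ Finset.HasAntidiagonal.antidiagonal x.1, (a y.1 * p y.2) • D x.2 := by
        intro x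
        rw [← Finset.sum_smul, hN, ← smul_assoc, neg_smul]
      simp only [h3, hd, Finset.smul_sum]
      rw [Finset.sum_sigma', Finset.sum_sigma']
      refine Finset.sum_bij' (fun x _ => ⟨(x.2.1 + x.1.2, x.2.2), (x.2.1, x.1.2)⟩)
        (fun x _ => ⟨(x.2.1 + x.1.2, x.2.2), (x.2.1, x.1.2)⟩) ?_ ?_ ?_ ?_ ?_
      · rintro ⟨⟨i, j⟩, ⟨k, l⟩⟩ h
        simp at h ⊢; omega
      · rintro ⟨⟨i, j⟩, ⟨k, l⟩⟩ h
        simp at h ⊢; omega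
      · rintro ⟨⟨i, j⟩, ⟨k, l⟩⟩ h
        simp at h ⊢; omega
      · rintro ⟨⟨i, j⟩, ⟨k, l⟩⟩ h
        simp at h ⊢; omega
      · rintro ⟨⟨i, j⟩, ⟨k, l⟩⟩ h
        simp only [smul_smul, mul_comm]
    rw [h2, Finset.smul_sum] at h1
    have h4 : ∑ x ∈ Finset.HasAntidiagonal.antidiagonal n, (n : ℤ) • (a x.1 • D x.2)
        = ∑ x ∈ Finset.HasAntidiagonal.antidiagonal n, ((x.1 : ℤ) • (a x.1 • D x.2)
            + a x.1 • ((x.2 : ℤ) • D x.2)) := by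
      refine Finset.sum_congr rfl fun x hx => ?_
      rw [Finset.HasAntidiagonal.mem_antidiagonal] at hx
      rw [smul_comm (a x.1), ← add_smul, ← hx]
      push_cast; rfl
    rw [h4, Finset.sum_add_distrib] at h1
    simp only [neg_smul, Finset.sum_neg_distrib] at h1
    simp only [smul_add, Finset.sum_add_distrib]
    have h5 := sub_eq_zero.2 h1
    rw [← h5]
    abel
  intro n
  rw [← add_eq_zero_iff_eq_neg]
  induction n using Nat.strong_induction_on with
  | _ n ih =>
    have h := key n
    rw [Finset.sum_eq_single (0, n)] at h
    · simpa [ha0] using h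
    · rintro ⟨i, j⟩ hij hne
      rw [Finset.HasAntidiagonal.mem_antidiagonal] at hij
      have : j < n := by
        rcases Nat.eq_zero_or_pos i with h0 | h0
        · exact absurd (by simp at hij ⊢; omega) hne
        · simp at hij; omega
      simp only
      rw [ih j this, smul_zero]
    · simp


theorem stmt4 {R M : Type*} [CommRing R] [AddCommGroup M] [Module R M]
    (lam : ℕ → R → R) (Ψ : ℕ → R → R) (Λ : ℕ → M → M) (d : R → M)
    -- `R` is a pre-λ-ring.
    (hlam0 : ∀ r : R, lam 0 r = 1)
    (hlam1 : ∀ r : R, lam 1 r = r)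
    (hlamAdd : ∀ i, ∀ r s : R,
      lam i (r + s) = ∑ k ∈ Finset.range (i + 1), lam k r * lam (i - k) s)
    -- The Adams operations are defined recursively by the Newton formula.
    (hNewton : ∀ ν, 1 ≤ ν → ∀ r : R, Ψ ν r =
      (∑ i ∈ Finset.Ico 1 ν, (-1 : R) ^ (i + 1) * lam i r * Ψ (ν - i) r) +
        (-1 : R) ^ (ν + 1) * (ν : R) * lam ν r)
    (hΛadd : ∀ i, 1 ≤ i → ∀ m m' : M, Λ i (m + m') = Λ i m + Λ i m')
    (hΛ1 : ∀ m : M, Λ 1 m = m)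
    (hΛsmul : ∀ i, 1 ≤ i → ∀ (r : R) (m : M), Λ i (r • m) = Ψ i r • Λ i m)
    -- `d` is a λ-derivation.
    (hdadd : ∀ r s : R, d (r + s) = d r + d s)
    (hdmul : ∀ r s : R, d (r * s) = r • d s + s • d r)
    (hdlam : ∀ i, 1 ≤ i → ∀ r : R,
      d (lam i r) = ∑ j ∈ Finset.Icc 1 i, lam (i - j) r • Λ j (d r)) :
    -- Then `d` is a Ψ-derivation with respect to the Adams operations
    -- `ψ^ν = (−1)^{ν+1} ν Λ^ν` on `M`.
    ∀ ν, 1 ≤ ν → ∀ r : R,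
      d (Ψ ν r) = ((-1 : ℤ) ^ (ν + 1) * (ν : ℤ)) • Λ ν (d r) := by
  intro ν hν r
  let d' : R →+ M := AddMonoidHom.mk' d hdadd
  have hd1 : d 1 = 0 := by
    have := hdmul 1 1
    simpa using this
  have h := aux_rec (fun i => (-1 : R) ^ i * lam i r) (fun k => if k = 0 then 0 else Ψ k r)
    (fun j => if j = 0 then 0 else ((-1 : ℤ) ^ j) • Λ j (d r)) d' hdmul (by simp [hlam0]) ?_ ?_ ν
  · have hν0 : ν ≠ 0 := by omega
    simp only [hν0, if_false] at h
    refine Eq.trans h ?_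
    rw [smul_smul, ← neg_smul]
    congr 1
    ring
  · intro n
    rw [Finset.Nat.sum_antidiagonal_eq_sum_range_succ_mk, Finset.sum_range_succ]
    rcases Nat.eq_zero_or_pos n with rfl | hn
    · simp
    · rw [Finset.range_eq_Ico, Finset.sum_eq_sum_Ico_succ_bot hn]
      have hn0 : n ≠ 0 := by omega
      have e : ∑ k ∈ Finset.Ico (0 + 1) n,
          (-1 : R) ^ k * lam k r * (if n - k = 0 then 0 else Ψ (n - k) r)
          = - ∑ i ∈ Finset.Ico 1 n, (-1 : R) ^ (i + 1) * lam i r * Ψ (n - i) r := by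
        rw [← Finset.sum_neg_distrib]
        refine Finset.sum_congr rfl fun k hk => ?_
        rw [Finset.mem_Ico] at hk
        rw [if_neg (by omega)]
        ring
      simp only [e]
      have := hNewton n hn r
      simp [hn0, hlam0]
      rw [this]
      ring
  · intro n
    change d _ = _
    have hdneg : ∀ x, d ((-1 : R) ^ n * x) = ((-1 : ℤ) ^ n) • d x := by
      intro x
      have : (-1 : R) ^ n * x = ((-1 : ℤ) ^ n) • x := by simp [zsmul_eq_mul]
      rw [this]
      exact map_zsmul d' _ _
    rw [hdneg, ← Finset.Nat.sum_antidiagonal_swap, Finset.Nat.sum_antidiagonal_eq_sum_range_succ_mk]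
    rcases Nat.eq_zero_or_pos n with rfl | hn
    · simp [hlam0, hd1]
    · rw [hdlam n hn, Finset.range_eq_Ico, Finset.sum_eq_sum_Ico_succ_bot (by omega),
        Finset.smul_sum]
      simp only [Prod.swap, if_true, smul_zero, zero_add]
      refine Finset.sum_congr (by ext; simp) fun k hk => ?_
      simp only [Finset.mem_Icc, Finset.mem_Ico] at hk
      rw [if_neg (by omega)]
      have e : (-1 : R) ^ (n - k) * lam (n - k) r = ((-1 : ℤ) ^ (n - k)) • lam (n - k) r := by
        simp [zsmul_eq_mul]
      rw [e, smul_assoc, smul_comm (lam (n - k) r), smul_smul, ← pow_add]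
      congr 2
      omega
end

section
/- Let R be a pre-λ-ring with operations λ^i, let Ψ^ν : R → R (ν ≥ 1) be the Adams operations defined by the Newton formula, let M be an R-module that is ℤ-torsion-free (n·m = 0 with n ≥ 1 implies m = 0), and let Λ^i : M → M (i ≥ 1) be additive group homomorphisms with Λ^1(m) = m and Λ^i(r·m) = Ψ^i(r)·Λ^i(m). Suppose d : R → M is an additive homomorphism satisfying d(rs) = r·d(s) + d(r)·s and d(Ψ^ν(r)) = (−1)^{ν+1} ν Λ^ν(d(r)) for all r,s ∈ R and ν ≥ 1. Then d(λ^ν(r)) = Σ_{i=1}^{ν} Λ^i(d(r))·λ^{ν−i}(r) for all r ∈ R and ν ≥ 1; that is, when M is ℤ-torsion-free every Ψ-derivation is a λ-derivation. -/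
theorem stmt5 {R M : Type*} [CommRing R] [AddCommGroup M] [Module R M]
    (lam : ℕ → R → R) (Ψ : ℕ → R → R) (Λ : ℕ → M → M) (d : R → M)
    -- `R` is a pre-λ-ring.
    (hlam0 : ∀ r : R, lam 0 r = 1)
    (hlam1 : ∀ r : R, lam 1 r = r)
    (hlamAdd : ∀ i, ∀ r s : R,
      lam i (r + s) = ∑ k ∈ Finset.range (i + 1), lam k r * lam (i - k) s)
    -- The Adams operations are defined recursively by the Newton formula.
    (hNewton : ∀ ν, 1 ≤ ν → ∀ r : R, Ψ ν r =
      (∑ i ∈ Finset.Ico 1 ν, (-1 : R) ^ (i + 1) * lam i r * Ψ (ν - i) r) +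
        (-1 : R) ^ (ν + 1) * (ν : R) * lam ν r)
    -- `M` is ℤ-torsion-free.
    (htf : ∀ (n : ℕ) (m : M), 1 ≤ n → n • m = 0 → m = 0)
    (hΛadd : ∀ i, 1 ≤ i → ∀ m m' : M, Λ i (m + m') = Λ i m + Λ i m')
    (hΛ1 : ∀ m : M, Λ 1 m = m)
    (hΛsmul : ∀ i, 1 ≤ i → ∀ (r : R) (m : M), Λ i (r • m) = Ψ i r • Λ i m)
    -- `d` is a Ψ-derivation with respect to the Adams operations.
    (hdadd : ∀ r s : R, d (r + s) = d r + d s)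
    (hdmul : ∀ r s : R, d (r * s) = r • d s + s • d r)
    (hdPsi : ∀ ν, 1 ≤ ν → ∀ r : R,
      d (Ψ ν r) = ((-1 : ℤ) ^ (ν + 1) * (ν : ℤ)) • Λ ν (d r)) :
    -- Then `d` is a λ-derivation.
    ∀ ν, 1 ≤ ν → ∀ r : R,
      d (lam ν r) = ∑ i ∈ Finset.Icc 1 ν, lam (ν - i) r • Λ i (d r) := by
  have key : ∀ r : R, ∀ n : ℕ, (n : R) * lam n r =
      ∑ j ∈ Finset.Icc 1 n, ((-1 : R) ^ (j + 1) * Ψ j r) * lam (n - j) r := by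
    intro r n
    rcases Nat.eq_zero_or_pos n with rfl | hn
    · simp
    have hI : Finset.Icc 1 n = Finset.Ico 1 (n + 1) := by
      ext; simp only [Finset.mem_Icc, Finset.mem_Ico]; omega
    rw [hI, Finset.sum_Ico_succ_top hn, hNewton n hn r, Nat.sub_self, hlam0]
    have hs : ∑ j ∈ Finset.Ico 1 n, ((-1 : R) ^ (j + 1) * Ψ j r) * lam (n - j) r =
        ∑ i ∈ Finset.Ico 1 n, ((-1 : R) ^ (n - i + 1) * Ψ (n - i) r) * lam i r := by
      refine Finset.sum_nbij' (fun j => n - j) (fun j => n - j) ?_ ?_ ?_ ?_ ?_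
      · intro a ha; simp at ha ⊢; omega
      · intro a ha; simp at ha ⊢; omega
      · intro a ha; simp at ha ⊢; omega
      · intro a ha; simp at ha ⊢; omega
      · intro a ha
        simp only [Finset.mem_Ico] at ha
        have : n - (n - a) = a := by omega
        simp only [this]
    have h2 : (-1 : R) ^ (n + 1) * (-1 : R) ^ (n + 1) = 1 := by
      rw [← mul_pow]; simp
    have h3 : ∑ i ∈ Finset.Ico 1 n, ((-1 : R) ^ (n - i + 1) * Ψ (n - i) r) * lam i r =
        - ((-1 : R) ^ (n + 1) *
          ∑ i ∈ Finset.Ico 1 n, (-1 : R) ^ (i + 1) * lam i r * Ψ (n - i) r) := by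
      rw [Finset.mul_sum, ← Finset.sum_neg_distrib]
      refine Finset.sum_congr rfl fun i hi => ?_
      simp only [Finset.mem_Ico] at hi
      obtain ⟨k, rfl⟩ : ∃ k, n = k + i := ⟨n - i, by omega⟩
      have h4 : (-1 : R) ^ i * (-1 : R) ^ i = 1 := by
        rw [← mul_pow]; simp
      rw [Nat.add_sub_cancel]
      simp only [pow_add, pow_one]
      linear_combination ((-1 : R) ^ k * Ψ k r * lam i r) * h4
    rw [hs, h3]
    linear_combination (-(n : R) * lam n r) * h2
  let D : R →+ M := AddMonoidHom.mk' d hdadd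
  have hD : ∀ x, d x = D x := fun _ => rfl
  have hd1 : d 1 = 0 := by
    have := hdmul 1 1
    simpa using this
  have hdq : ∀ r : R, ∀ j, 1 ≤ j →
      d ((-1 : R) ^ (j + 1) * Ψ j r) = (j : R) • Λ j (d r) := by
    intro r j hj
    have e : (-1 : R) ^ (j + 1) * Ψ j r = ((-1 : ℤ) ^ (j + 1)) • Ψ j r := by
      simp [zsmul_eq_mul]
    rw [e, hD, map_zsmul, ← hD, hdPsi j hj, smul_smul, ← mul_assoc, ← mul_pow]
    simp [Nat.cast_smul_eq_nsmul]
  have main : ∀ r : R, ∀ n : ℕ,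
      d (lam n r) = ∑ i ∈ Finset.Icc 1 n, lam (n - i) r • Λ i (d r) := by
    intro r n
    induction n using Nat.strong_induction_on with
    | _ n ih =>
    rcases Nat.eq_zero_or_pos n with rfl | hn
    · simp [hlam0, hd1]
    rw [← sub_eq_zero]
    refine htf n _ hn ?_
    rw [smul_sub, sub_eq_zero]
    have e1 : n • d (lam n r) = d ((n : R) * lam n r) := by
      rw [← nsmul_eq_mul, hD, hD, map_nsmul]
    rw [e1, key, hD, map_sum]
    have e2 : ∀ j ∈ Finset.Icc 1 n,
        D (((-1 : R) ^ (j + 1) * Ψ j r) * lam (n - j) r) =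
        ∑ i ∈ Finset.Icc 1 (n - j),
          (((-1 : R) ^ (j + 1) * Ψ j r) * lam (n - i - j) r) • Λ i (d r)
        + ((j : R) * lam (n - j) r) • Λ j (d r) := by
      intro j hj
      simp only [Finset.mem_Icc] at hj
      rw [← hD, hdmul, hdq r j hj.1, ih (n - j) (by omega), Finset.smul_sum, smul_smul,
        mul_comm (lam (n - j) r)]
      congr 1
      refine Finset.sum_congr rfl fun i _ => ?_
      rw [smul_smul, Nat.sub_right_comm]
    rw [Finset.sum_congr rfl e2, Finset.sum_add_distrib,
      Finset.sum_comm' (t' := Finset.Icc 1 n) (s' := fun i => Finset.Icc 1 (n - i))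
        (by intro x y; simp only [Finset.mem_Icc]; omega),
      ← Finset.sum_add_distrib, Finset.smul_sum]
    refine Finset.sum_congr rfl fun i hi => ?_
    simp only [Finset.mem_Icc] at hi
    rw [← Finset.sum_smul, ← key r (n - i), ← add_smul, ← add_mul, ← Nat.cast_add,
      Nat.sub_add_cancel hi.2, mul_smul, Nat.cast_smul_eq_nsmul]
  intro ν _ r
  exact main r ν
end

section
/- Let R be a pre-λ-ring with operations λ^i, let M be an R-module, and let Λ^i : M → M (i ≥ 1) be additive group homomorphisms with Λ^1(m) = m. Define operations λ̃^i on the square-zero extension R ⋊ M by λ̃^0(r,m) = (1,0) and λ̃^i(r,m) = (λ^i(r), Σ_{j=1}^{i} Λ^j(m)·λ^{i−j}(r)) for i ≥ 1. Then the λ̃^i make R ⋊ M into a pre-λ-ring: λ̃^0(x) = (1,0), λ̃^1(x) = x, and λ̃^i(x+y) = Σ_{j=0}^{i} λ̃^j(x)·λ̃^{i−j}(y) for all x,y ∈ R ⋊ M and all i ≥ 0. -/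
/-- The operations of the semidirect product `R ⋊_λ M`:
`λ̃^0(r,m) = (1,0)` and `λ̃^i(r,m) = (λ^i(r), Σ_{j=1}^{i} Λ^j(m)·λ^{i−j}(r))` for `i ≥ 1`. -/
def lamSd {R M : Type*} [CommRing R] [AddCommGroup M] [Module R M]
    (lam : ℕ → R → R) (Λ : ℕ → M → M) (i : ℕ) (x : R × M) : R × M :=
  if i = 0 then ((1 : R), (0 : M))
  else (lam i x.1, ∑ j ∈ Finset.Icc 1 i, lam (i - j) x.1 • Λ j x.2)

theorem lamSd_eq_aux {R M : Type*} [CommRing R] [AddCommGroup M] [Module R M]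
    (lam : ℕ → R → R) (Λ : ℕ → M → M) (hlam0 : ∀ r : R, lam 0 r = 1) (i : ℕ) (x : R × M) :
    lamSd lam Λ i x = (lam i x.1, ∑ p ∈ Finset.HasAntidiagonal.antidiagonal i,
      lam p.1 x.1 • (if p.2 = 0 then 0 else Λ p.2 x.2)) := by
  unfold lamSd
  split_ifs with h
  · subst h; simp [hlam0]
  · congr 1
    rw [← Finset.Nat.sum_antidiagonal_swap]
    simp only [Prod.fst_swap, Prod.snd_swap]
    rw [Finset.Nat.sum_antidiagonal_eq_sum_range_succ
      (fun a b => lam b x.1 • (if a = 0 then 0 else Λ a x.2))]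
    rw [Finset.sum_range_succ', Finset.range_eq_Ico,
      Finset.sum_Ico_add' (fun a => lam (i - a) x.1 • (if a = 0 then 0 else Λ a x.2)) 0 i 1]
    simp only [if_true, smul_zero, add_zero, zero_add]
    apply Finset.sum_congr
    · ext a; simp only [Finset.mem_Icc, Finset.mem_Ico]; omega
    · intro a ha
      rw [Finset.mem_Ico] at ha
      rw [if_neg (by omega)]

theorem conv_left_aux {R M : Type*} [CommRing R] [AddCommGroup M] [Module R M]
    (f g : ℕ → R) (L : ℕ → M) (i : ℕ) :
    ∑ p ∈ Finset.HasAntidiagonal.antidiagonal i, (∑ q ∈ Finset.HasAntidiagonal.antidiagonal p.1, f q.1 * g q.2) • L p.2 =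
    ∑ p ∈ Finset.HasAntidiagonal.antidiagonal i, f p.1 • ∑ q ∈ Finset.HasAntidiagonal.antidiagonal p.2, g q.1 • L q.2 := by
  simp only [Finset.sum_smul, Finset.smul_sum, smul_smul]
  rw [Finset.sum_sigma', Finset.sum_sigma']
  refine Finset.sum_nbij' (fun t => ⟨(t.2.1, t.2.2 + t.1.2), (t.2.2, t.1.2)⟩)
    (fun t => ⟨(t.1.1 + t.2.1, t.2.2), (t.1.1, t.2.1)⟩) ?_ ?_ ?_ ?_ ?_ <;>
  · rintro ⟨⟨a, b⟩, ⟨c, d⟩⟩ h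
    simp only [Finset.mem_sigma, Finset.HasAntidiagonal.mem_antidiagonal] at h
    obtain ⟨h1, h2⟩ := h
    subst h2
    subst h1
    simp [add_assoc]

theorem stmt7 {R M : Type*} [CommRing R] [AddCommGroup M] [Module R M]
    (lam : ℕ → R → R) (Λ : ℕ → M → M)
    -- `R` is a pre-λ-ring.
    (hlam0 : ∀ r : R, lam 0 r = 1)
    (hlam1 : ∀ r : R, lam 1 r = r)
    (hlamAdd : ∀ i, ∀ r s : R,
      lam i (r + s) = ∑ k ∈ Finset.range (i + 1), lam k r * lam (i - k) s)
    (hΛadd : ∀ i, 1 ≤ i → ∀ m m' : M, Λ i (m + m') = Λ i m + Λ i m')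
    (hΛ1 : ∀ m : M, Λ 1 m = m) :
    -- Then the `λ̃^i` make `R ⋊ M` into a pre-λ-ring.
    (∀ x : R × M, lamSd lam Λ 0 x = ((1 : R), (0 : M))) ∧
    (∀ x : R × M, lamSd lam Λ 1 x = x) ∧
    (∀ i, ∀ x y : R × M,
      lamSd lam Λ i (x + y) =
        ∑ j ∈ Finset.range (i + 1), sqMul (lamSd lam Λ j x) (lamSd lam Λ (i - j) y)) := by
  refine ⟨fun x => by simp [lamSd], fun x => by simp [lamSd, hlam0, hlam1, hΛ1], ?_⟩
  intro i x y
  have hA : ∀ i, ∀ r s : R,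
      lam i (r + s) = ∑ q ∈ Finset.HasAntidiagonal.antidiagonal i, lam q.1 r * lam q.2 s := by
    intro i r s
    rw [hlamAdd, Finset.Nat.sum_antidiagonal_eq_sum_range_succ (fun a b => lam a r * lam b s)]
  have hL : ∀ b, ∀ m n : M, (if b = 0 then 0 else Λ b (m + n)) =
      (if b = 0 then 0 else Λ b m) + (if b = 0 then 0 else Λ b n) := by
    intro b m n
    split_ifs with h
    · simp
    · exact hΛadd b (by omega) m n
  rw [← Finset.Nat.sum_antidiagonal_eq_sum_range_succ
    (fun a b => sqMul (lamSd lam Λ a x) (lamSd lam Λ b y))]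
  simp only [lamSd_eq_aux lam Λ hlam0, sqMul]
  refine Prod.ext ?_ ?_
  · simp only [Prod.fst_sum, Prod.fst_add]
    exact hA i _ _
  · simp only [Prod.snd_sum, Prod.fst_add, Prod.snd_add, hL, smul_add, Finset.sum_add_distrib]
    rw [add_comm]
    congr 1
    · simp only [hA]
      exact conv_left_aux (fun a => lam a x.1) (fun a => lam a y.1)
        (fun b => if b = 0 then 0 else Λ b y.2) i
    · rw [add_comm x.1 y.1, ← Finset.Nat.sum_antidiagonal_swap (n := i)
        (f := fun p => lam p.2 y.1 • ∑ q ∈ Finset.HasAntidiagonal.antidiagonal p.1,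
          lam q.1 x.1 • (if q.2 = 0 then 0 else Λ q.2 x.2))]
      simp only [hA]
      exact conv_left_aux (fun a => lam a y.1) (fun a => lam a x.1)
        (fun b => if b = 0 then 0 else Λ b x.2) i
end

section
/- Let R be a pre-λ-ring with operations λ^i, let M be an R-module, and let Λ^i : M → M (i ≥ 1) be additive group homomorphisms with Λ^1(m) = m. Let R ⋊_λ M be the square-zero extension R ⋊ M with operations λ̃^0(r,m) = (1,0) and λ̃^i(r,m) = (λ^i(r), Σ_{j=1}^{i} Λ^j(m)·λ^{i−j}(r)) for i ≥ 1, and let π : R ⋊_λ M → R be the projection π(r,m) = r. Then the assignment d ↦ σ_d, where σ_d(r) = (r, d(r)), is a bijection from the set of additive homomorphisms d : R → M satisfying d(rs) = r·d(s) + d(r)·s and d(λ^i(r)) = Σ_{j=0}^{i−1} λ^j(r)·Λ^{i−j}(d(r)) for all i ≥ 1 (the λ-derivations), onto the set of ring homomorphisms σ : R → R ⋊_λ M with π ∘ σ = id_R and σ ∘ λ^i = λ̃^i ∘ σ for all i ≥ 0. -/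
theorem stmt8 {R M : Type*} [CommRing R] [AddCommGroup M] [Module R M]
    (lam : ℕ → R → R) (Λ : ℕ → M → M)
    -- `R` is a pre-λ-ring.
    (hlam0 : ∀ r : R, lam 0 r = 1)
    (hlam1 : ∀ r : R, lam 1 r = r)
    (hlamAdd : ∀ i, ∀ r s : R,
      lam i (r + s) = ∑ k ∈ Finset.range (i + 1), lam k r * lam (i - k) s)
    (hΛadd : ∀ i, 1 ≤ i → ∀ m m' : M, Λ i (m + m') = Λ i m + Λ i m')
    (hΛ1 : ∀ m : M, Λ 1 m = m) :
    -- `d ↦ σ_d` with `σ_d(r) = (r, d r)` is a bijection from the λ-derivations of `R`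
    -- with values in `M` onto the ring-homomorphism sections of `π : R ⋊_λ M → R`
    -- commuting with all the operations `λ̃^i` (i ≥ 0).
    Set.BijOn (fun (d : R → M) => fun r : R => ((r, d r) : R × M))
      {d : R → M |
        (∀ r s : R, d (r + s) = d r + d s) ∧
        (∀ r s : R, d (r * s) = r • d s + s • d r) ∧
        (∀ i, 1 ≤ i → ∀ r : R,
          d (lam i r) = ∑ j ∈ Finset.range i, lam j r • Λ (i - j) (d r))}
      {σ : R → R × M |
        (∀ r s : R, σ (r + s) = σ r + σ s) ∧
        (∀ r s : R, σ (r * s) = sqMul (σ r) (σ s)) ∧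
        σ 1 = ((1 : R), (0 : M)) ∧
        (∀ r : R, (σ r).1 = r) ∧
        (∀ i : ℕ, ∀ r : R, σ (lam i r) = lamSd lam Λ i (σ r))} := by
  have key : ∀ (i : ℕ) (r : R) (m : M),
      ∑ j ∈ Finset.range i, lam j r • Λ (i - j) m
        = ∑ j ∈ Finset.Icc 1 i, lam (i - j) r • Λ j m := by
    intro i r m
    refine Finset.sum_bij' (fun j _ => i - j) (fun j _ => i - j) ?_ ?_ ?_ ?_ ?_
    · intro j hj
      simp only [Finset.mem_range, Finset.mem_Icc] at *
      omega
    · intro j hj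
      simp only [Finset.mem_range, Finset.mem_Icc] at *
      omega
    · intro j hj
      simp only [Finset.mem_range] at *
      omega
    · intro j hj
      simp only [Finset.mem_Icc] at *
      omega
    · intro j hj
      have h : i - (i - j) = j := by
        simp only [Finset.mem_range] at hj
        omega
      simp only [h]
  refine ⟨?_, ?_, ?_⟩
  · rintro d ⟨hadd, hmul, hl⟩
    have h1 : d 1 = 0 := by
      have h := hmul 1 1
      simp only [mul_one, one_smul] at h
      exact left_eq_add.mp h
    refine ⟨?_, ?_, ?_, ?_, ?_⟩
    · intro r s
      simp [hadd]
    · intro r s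
      simp [sqMul, hmul]
    · simp [h1]
    · intro r
      rfl
    · intro i r
      by_cases hi : i = 0
      · subst hi
        simp [lamSd, hlam0, h1]
      · simp only [lamSd, if_neg hi]
        rw [hl i (Nat.one_le_iff_ne_zero.mpr hi) r, key]
  · intro d _ e _ h
    funext r
    exact congrArg Prod.snd (congrFun h r)
  · rintro σ ⟨hadd, hmul, h1, hπ, hl⟩
    refine ⟨fun r => (σ r).2, ⟨?_, ?_, ?_⟩, ?_⟩
    · intro r s
      simp [hadd]
    · intro r s
      simp [hmul, sqMul, hπ]
    · intro i hi r
      have hi' : i ≠ 0 := by omega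
      simp only [hl, lamSd, if_neg hi', hπ]
      rw [key]
    · funext r
      exact Prod.ext (hπ r).symm rfl
end

section
/- Let n be a positive integer. If 2^n divides l^{2n} − l^n for every integer l ≥ 2 (equivalently, if 2^n divides the greatest common divisor G_{n,2n} of the set { l^{2n} − l^n : l ∈ ℤ, l ≥ 2 }), then n = 1, n = 2, or n = 4. -/
theorem stmt16 (n : ℕ) (hn : 1 ≤ n)
    (h : ∀ l : ℤ, 2 ≤ l → (2 : ℤ) ^ n ∣ l ^ (2 * n) - l ^ n) :
    n = 1 ∨ n = 2 ∨ n = 4 := by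
  have h3 : (2 : ℤ) ^ n ∣ 3 ^ n - 1 := by
    have h0 := h 3 (by norm_num)
    have e : (3 : ℤ) ^ (2 * n) - 3 ^ n = 3 ^ n * (3 ^ n - 1) := by ring
    rw [e] at h0
    have hc : IsCoprime ((2 : ℤ) ^ n) (3 ^ n) := IsCoprime.pow ⟨-1, 1, by norm_num⟩
    exact hc.dvd_of_dvd_mul_left h0
  rcases Nat.even_or_odd' n with ⟨m, hm | hm⟩
  · have e : (3 : ℤ) ^ n - 1 = 9 ^ m - 1 ^ m := by
      rw [hm, pow_mul]; norm_num
    rw [e] at h3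
    have hmul := Int.two_pow_sub_pow' (x := 9) (y := 1) m (by norm_num) (by norm_num)
    rw [← emultiplicity_mul Int.prime_two] at hmul
    have h4 : (2 : ℤ) ^ n ∣ (9 - 1) * m := by
      rw [pow_dvd_iff_le_emultiplicity] at h3 ⊢
      rw [← hmul]; exact h3
    have h5 : 2 ^ n ∣ 8 * m := by
      norm_num at h4
      exact_mod_cast h4
    have h6 := Nat.le_of_dvd (by omega) h5
    have h7 : n < 5 := by
      by_contra hcon
      obtain ⟨k, hk⟩ : ∃ k, n = k + 5 := ⟨n - 5, by omega⟩
      have h8 : k < 2 ^ k := Nat.lt_two_pow_self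
      rw [hk, pow_add] at h6
      omega
    omega
  · by_cases h1 : n = 1
    · exact Or.inl h1
    · exfalso
      have h4 : (4 : ℤ) ∣ 3 ^ n - 1 :=
        (pow_dvd_pow (2 : ℤ) (show 2 ≤ n by omega)).trans h3
      have h9 : (8 : ℤ) ∣ 9 ^ m - 1 := by
        have := sub_dvd_pow_sub_pow (9 : ℤ) 1 m
        norm_num at this
        exact this
      have e : (3 : ℤ) ^ n = 9 ^ m * 3 := by
        rw [hm, pow_succ, pow_mul]; norm_num
      omega
end

section
/- Let k and n be positive integers with n > k + 1. Then for every integer d, d divides l^{n+k} − l^n for every integer l ≥ 2 if and only if d divides l^{n+k+1} − l^{n+1} for every integer l ≥ 2. Consequently the greatest common divisors satisfy G_{n,n+k} = G_{n+1,n+k+1}. -/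
theorem aux_three (k : ℕ) (hk : 1 ≤ k) : ¬ (2 ^ (k + 3) ∣ 3 ^ k - 1) := by
  intro h
  rcases Nat.even_or_odd k with he | ho
  · have h1 := padicValNat.pow_two_sub_pow (x := 3) (y := 1) (by norm_num) (by norm_num)
      (by norm_num) (n := k) (by omega) he
    have h2 : padicValNat 2 (3 + 1) = 2 := by
      rw [show 3 + 1 = 2 ^ 2 by norm_num]; exact padicValNat.prime_pow 2
    have h3 : padicValNat 2 (3 - 1) = 1 := by
      rw [show 3 - 1 = 2 by norm_num]; exact padicValNat.self (by norm_num)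
    have h4 : padicValNat 2 k < k :=
      Nat.lt_two_pow_self.trans_le (Nat.le_of_dvd hk pow_padicValNat_dvd)
    have hne : 3 ^ k - 1 ≠ 0 := by
      have : 1 < 3 ^ k := Nat.one_lt_pow (by omega) (by norm_num)
      omega
    have h5 := (padicValNat_dvd_iff_le (p := 2) hne).1 h
    rw [one_pow] at h1
    omega
  · obtain ⟨j, rfl⟩ := ho
    have h1 : 4 ∣ 3 ^ (2 * j + 1) - 1 :=
      dvd_trans (by rw [show 2 * j + 1 + 3 = 2 + (2 * j + 2) by ring, pow_add]; exact ⟨_, rfl⟩) h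
    have h2 : 3 ^ (2 * j + 1) % 4 = 3 := by
      rw [pow_succ, pow_mul, Nat.mul_mod, Nat.pow_mod]; norm_num
    clear h
    generalize 3 ^ (2 * j + 1) = x at h1 h2
    omega

theorem aux_nat (k n d : ℕ) (hk : 1 ≤ k) (hn : k + 1 < n)
    (h : ∀ l : ℕ, 2 ≤ l → d ∣ l ^ (n + 1) * (l ^ k - 1)) (l : ℕ) (hl : 2 ≤ l) :
    d ∣ l ^ n * (l ^ k - 1) := by
  rw [Nat.dvd_iff_prime_pow_dvd_dvd]
  intro p e hp hpe
  by_cases hpl : p ∣ l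
  · have hen : e ≤ n := by
      by_contra hen
      have hd : p ^ (n + 1) ∣ d := (pow_dvd_pow p (by omega)).trans hpe
      have key : ∀ u : ℕ, 2 ≤ u → Nat.Coprime p u → p ^ (n + 1) ∣ u ^ k - 1 := fun u hu hc =>
        (Nat.Coprime.pow (n + 1) (n + 1) hc).dvd_of_dvd_mul_left (hd.trans (h u hu))
      rcases hp.two_le.eq_or_lt with h2 | h3
      · subst h2
        exact aux_three k hk ((pow_dvd_pow 2 (by omega)).trans (key 3 (by norm_num) (by norm_num)))
      · have hc : Nat.Coprime p (p - 1) := by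
          rw [Nat.coprime_self_sub_right (by omega)]; simp
        have h1 := key (p - 1) (by omega) hc
        have h4 : 1 < (p - 1) ^ k := Nat.one_lt_pow (by omega) (by omega)
        have h5 := Nat.le_of_dvd (by omega) h1
        have h6 : (p - 1) ^ k ≤ p ^ k := Nat.pow_le_pow_left (by omega) k
        have h7 : p ^ k ≤ p ^ (n + 1) := Nat.pow_le_pow_right (by omega) (by omega)
        omega
    exact Dvd.dvd.mul_right ((pow_dvd_pow p hen).trans (pow_dvd_pow_of_dvd hpl n)) _
  · have hc := (Nat.Prime.coprime_iff_not_dvd hp).2 hpl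
    exact Dvd.dvd.mul_left ((Nat.Coprime.pow e (n + 1) hc).dvd_of_dvd_mul_left (hpe.trans (h l hl))) _

theorem aux_cast (a k l : ℕ) (hl : 2 ≤ l) :
    (l : ℤ) ^ (a + k) - (l : ℤ) ^ a = ((l ^ a * (l ^ k - 1) : ℕ) : ℤ) := by
  have : 1 ≤ l ^ k := Nat.one_le_pow _ _ (by omega)
  push_cast [Nat.cast_sub this]
  ring

theorem aux_iff (k n : ℕ) (hk : 1 ≤ k) (hn : k + 1 < n) (d : ℤ) :
      (∀ l : ℤ, 2 ≤ l → d ∣ l ^ (n + k) - l ^ n) ↔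
        (∀ l : ℤ, 2 ≤ l → d ∣ l ^ (n + k + 1) - l ^ (n + 1)) := by
  constructor
  · intro h l hl
    have := (h l hl).mul_right l
    have e : l ^ (n + k + 1) - l ^ (n + 1) = (l ^ (n + k) - l ^ n) * l := by ring
    rwa [e]
  · intro h l hl
    lift l to ℕ using by omega
    rw [aux_cast n k l (by omega), ← Int.natAbs_dvd, Int.natCast_dvd_natCast]
    refine aux_nat k n _ hk hn (fun m hm => ?_) l (by omega)
    have := h m (by omega)
    rwa [show n + k + 1 = n + 1 + k by ring, aux_cast (n + 1) k m hm, ← Int.natAbs_dvd,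
      Int.natCast_dvd_natCast] at this

theorem stmt17 (k n : ℕ) (hk : 1 ≤ k) (hn : k + 1 < n) :
    -- for every integer `d`, `d` divides all `l^{n+k} − l^n` (l ≥ 2) iff it divides
    -- all `l^{n+k+1} − l^{n+1}` (l ≥ 2) …
    (∀ d : ℤ,
      (∀ l : ℤ, 2 ≤ l → d ∣ l ^ (n + k) - l ^ n) ↔
        (∀ l : ℤ, 2 ≤ l → d ∣ l ^ (n + k + 1) - l ^ (n + 1))) ∧
    -- … consequently the greatest common divisors agree: `G_{n,n+k} = G_{n+1,n+k+1}`.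
    (∀ G G' : ℤ, 0 ≤ G → 0 ≤ G' →
      (∀ d : ℤ, (d ∣ G ↔ ∀ l : ℤ, 2 ≤ l → d ∣ l ^ (n + k) - l ^ n)) →
      (∀ d : ℤ, (d ∣ G' ↔ ∀ l : ℤ, 2 ≤ l → d ∣ l ^ (n + k + 1) - l ^ (n + 1))) →
      G = G') := by
  refine ⟨aux_iff k n hk hn, fun G G' hG hG' h h' => ?_⟩
  apply Int.dvd_antisymm hG hG'
  · exact (h' G).2 ((aux_iff k n hk hn G).1 ((h G).1 dvd_rfl))
  · exact (h G').2 ((aux_iff k n hk hn G').2 ((h' G').1 dvd_rfl))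
end

section
/- Fix positive integers n and n' and a family of integers ν_k (k ≥ 1), and for each k ≥ 1 define the map Ψ^k : ℤ × ℤ → ℤ × ℤ by Ψ^k(m, r) = (k^{n'}·m + ν_k·r, k^n·r). If Ψ^k ∘ Ψ^l = Ψ^{kl} for all k, l ≥ 1, then ν_l·(k^{n'} − k^n) = ν_k·(l^{n'} − l^n) for all k, l ≥ 1. -/
/-- The map `Ψ^k(m, r) = (k^{n'}·m + ν_k·r, k^n·r)` on `ℤ × ℤ`. -/
def PsiK (n n' : ℕ) (ν : ℕ → ℤ) (k : ℕ) (x : ℤ × ℤ) : ℤ × ℤ :=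
  ((k : ℤ) ^ n' * x.1 + ν k * x.2, (k : ℤ) ^ n * x.2)

theorem stmt19 (n n' : ℕ) (hn : 1 ≤ n) (hn' : 1 ≤ n') (ν : ℕ → ℤ)
    (h : ∀ k : ℕ, 1 ≤ k → ∀ l : ℕ, 1 ≤ l → ∀ x : ℤ × ℤ,
      PsiK n n' ν k (PsiK n n' ν l x) = PsiK n n' ν (k * l) x) :
    ∀ k : ℕ, 1 ≤ k → ∀ l : ℕ, 1 ≤ l →
      ν l * ((k : ℤ) ^ n' - (k : ℤ) ^ n) = ν k * ((l : ℤ) ^ n' - (l : ℤ) ^ n) := by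
  intro k hk l hl
  have h1 := congrArg Prod.fst (h k hk l hl (0, 1))
  have h2 := congrArg Prod.fst (h l hl k hk (0, 1))
  rw [Nat.mul_comm l k] at h2
  simp only [PsiK, mul_zero, mul_one, zero_add] at h1 h2
  linear_combination h1 - h2
end
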